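/- There exist constants C > 0 and η > 0 such that for all y ∈ [0, η], | cos( √(2y) − (√2/6)·y^{3/2} + (√2/120)·y^{5/2} + (√2/336)·y^{7/2} ) − exp(−y) | ≤ C·y⁵. -/

import Mathlib

theorem aux_cos (x : ℝ) (hx : |x| ≤ 1) :
    |Real.cos x - (1 - x ^ 2 / 2 + (x ^ 2) ^ 2 / 24 - (x ^ 2) ^ 3 / 720 + (x ^ 2) ^ 4 / 40320)|
      ≤ (x ^ 2) ^ 5 := by
  have hn : ‖(x : ℂ) * Complex.I‖ = |x| := by simp
  have h := Complex.exp_bound (x := (x : ℂ) * Complex.I) (by rw [hn]; exact hx)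
    (n := 10) (by norm_num)
  rw [hn] at h
  have h2 := (Complex.abs_re_le_norm _).trans h
  have e : (Complex.exp ((x : ℂ) * Complex.I)
      - ∑ m ∈ Finset.range 10, ((x : ℂ) * Complex.I) ^ m / (m.factorial : ℂ))
      = ((Real.cos x - (1 - x ^ 2 / 2 + (x ^ 2) ^ 2 / 24 - (x ^ 2) ^ 3 / 720
          + (x ^ 2) ^ 4 / 40320) : ℝ) : ℂ)
        + ((Real.sin x - (x - x ^ 3 / 6 + x ^ 5 / 120 - x ^ 7 / 5040 + x ^ 9 / 362880) : ℝ) : ℂ)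
          * Complex.I := by
    rw [Complex.exp_mul_I]
    have i2 : Complex.I ^ 2 = -1 := Complex.I_sq
    have i3 : Complex.I ^ 3 = -Complex.I := by rw [pow_succ, i2]; ring
    have i4 : Complex.I ^ 4 = 1 := by rw [pow_succ, i3]; linear_combination -i2
    have i5 : Complex.I ^ 5 = Complex.I := by rw [pow_succ, i4]; ring
    have i6 : Complex.I ^ 6 = -1 := by rw [pow_succ, i5]; linear_combination i2
    have i7 : Complex.I ^ 7 = -Complex.I := by rw [pow_succ, i6]; ring
    have i8 : Complex.I ^ 8 = 1 := by rw [pow_succ, i7]; linear_combination -i2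
    have i9 : Complex.I ^ 9 = Complex.I := by rw [pow_succ, i8]; ring
    simp only [Finset.sum_range_succ, Finset.sum_range_zero, mul_pow, i2, i3, i4, i5, i6, i7, i8,
      i9, Nat.factorial]
    push_cast
    ring
  rw [e, Complex.add_re, Complex.ofReal_re, Complex.re_ofReal_mul, Complex.I_re, mul_zero,
    add_zero] at h2
  refine h2.trans ?_
  have h10 : |x| ^ 10 = (x ^ 2) ^ 5 := by rw [← pow_mul, ← abs_pow]; exact abs_of_nonneg (by positivity)
  rw [h10]
  have : 0 ≤ (x ^ 2) ^ 5 := by positivity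
  norm_num [Nat.factorial]
  nlinarith

theorem aux_exp (y : ℝ) (h0 : 0 ≤ y) (h1 : y ≤ 1) :
    |Real.exp (-y) - (1 - y + y ^ 2 / 2 - y ^ 3 / 6 + y ^ 4 / 24)| ≤ y ^ 5 := by
  have hn : |-y| = y := by rw [abs_neg, abs_of_nonneg h0]
  have h := Real.exp_bound (x := -y) (by rw [hn]; exact h1) (n := 5) (by norm_num)
  rw [hn] at h
  have e : ∑ m ∈ Finset.range 5, (-y) ^ m / (m.factorial : ℝ)
      = 1 - y + y ^ 2 / 2 - y ^ 3 / 6 + y ^ 4 / 24 := by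
    simp only [Finset.sum_range_succ, Finset.sum_range_zero, Nat.factorial]
    push_cast
    ring
  rw [e] at h
  refine h.trans ?_
  have : 0 ≤ y ^ 5 := by positivity
  norm_num [Nat.factorial]
  nlinarith

noncomputable def auxQ (y : ℝ) : ℝ :=
    (-7867/907200) * y ^ 0
    + (283/226800) * y ^ 1
    + (-7333/76204800) * y ^ 2
    + (-10637/1143072000) * y ^ 3
    + (23467/4115059200) * y ^ 4
    + (-2169469/1646023680000) * y ^ 5
    + (5569807/34566497280000) * y ^ 6
    + (18961/51849745920000) * y ^ 7
    + (-643397/162030456000000) * y ^ 8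
    + (73586629/96786192384000000) * y ^ 9
    + (-278370689/5807171543040000000) * y ^ 10
    + (-5948627/725896442880000000) * y ^ 11
    + (328619/158018273280000000) * y ^ 12
    + (-86427787/813004016025600000000) * y ^ 13
    + (-68570597/3252016064102400000000) * y ^ 14
    + (38698381/12388632625152000000000) * y ^ 15
    + (225047/11382056224358400000000) * y ^ 16
    + (-2301599/72845159835893760000000) * y ^ 17
    + (6281/4856343989059584000000) * y ^ 18
    + (809/4662090229497200640000) * y ^ 19
    + (-1357/114221210622681415680000) * y ^ 20
    + (-17/30458989499381710848000) * y ^ 21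
    + (1/18275393699629026508800) * y ^ 22
    + (1/409368818871690193797120) * y ^ 23

theorem aux_poly (y t : ℝ) (ht : t = 2 * y * (1 - y / 6 + y ^ 2 / 120 + y ^ 3 / 336) ^ 2) :
    (1 - t / 2 + t ^ 2 / 24 - t ^ 3 / 720 + t ^ 4 / 40320)
      - (1 - y + y ^ 2 / 2 - y ^ 3 / 6 + y ^ 4 / 24) = y ^ 5 * auxQ y := by
  subst ht
  unfold auxQ
  ring

theorem aux_cont : Continuous auxQ := by
  unfold auxQ
  fun_prop

attribute [irreducible] auxQ

theorem aux_bd : ∃ M : ℝ, ∀ y ∈ Set.Icc (0 : ℝ) (1 / 8), ‖auxQ y‖ ≤ M :=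
  isCompact_Icc.exists_bound_of_continuousOn aux_cont.continuousOn

theorem aux_rpow (y : ℝ) (hy : 0 ≤ y) (n : ℕ) : y ^ ((n : ℝ) / 2) = Real.sqrt y ^ n := by
  rw [Real.sqrt_eq_rpow, ← Real.rpow_natCast, ← Real.rpow_mul hy]
  congr 1
  ring

set_option maxHeartbeats 1000000

/-- Scalar form of the fourth-order alternative approximate PITE: there are `C > 0`
and `η > 0` with
`|cos(√(2y) − (√2/6)y^{3/2} + (√2/120)y^{5/2} + (√2/336)y^{7/2}) − e^{−y}| ≤ C·y⁵`
for all `y ∈ [0, η]`. -/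
theorem stmt_19 :
    ∃ C > (0 : ℝ), ∃ η > (0 : ℝ), ∀ y ∈ Set.Icc (0 : ℝ) η,
      |Real.cos (Real.sqrt (2 * y) - (Real.sqrt 2 / 6) * y ^ ((3 : ℝ) / 2)
            + (Real.sqrt 2 / 120) * y ^ ((5 : ℝ) / 2)
            + (Real.sqrt 2 / 336) * y ^ ((7 : ℝ) / 2))
          - Real.exp (-y)| ≤ C * y ^ 5 := by
  obtain ⟨M, hM⟩ := aux_bd
  have hM0 : 0 ≤ M := (norm_nonneg _).trans (hM 0 (by norm_num))
  refine ⟨M + 33, by linarith, 1 / 8, by norm_num, fun y hy => ?_⟩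
  have hQ := hM y hy
  obtain ⟨h0, h1⟩ := hy
  have r3 := aux_rpow y h0 3
  have r5 := aux_rpow y h0 5
  have r7 := aux_rpow y h0 7
  push_cast at r3 r5 r7
  rw [r3, r5, r7, Real.sqrt_mul (by norm_num) y]
  have hs : Real.sqrt y ^ 2 = y := Real.sq_sqrt h0
  have h2 : Real.sqrt 2 ^ 2 = 2 := Real.sq_sqrt (by norm_num)
  set p : ℝ := 1 - y / 6 + y ^ 2 / 120 + y ^ 3 / 336 with hp
  have harg : Real.sqrt 2 * Real.sqrt y - Real.sqrt 2 / 6 * Real.sqrt y ^ 3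
      + Real.sqrt 2 / 120 * Real.sqrt y ^ 5 + Real.sqrt 2 / 336 * Real.sqrt y ^ 7
      = Real.sqrt 2 * Real.sqrt y * p := by
    rw [hp, ← hs, Real.sqrt_sq (Real.sqrt_nonneg y)]
    ring
  rw [harg]
  set x := Real.sqrt 2 * Real.sqrt y * p with hx
  have hx2 : x ^ 2 = 2 * y * p ^ 2 := by
    rw [hx, mul_pow, mul_pow, hs, h2]
  have hy2 : y ^ 2 ≤ 1 := by nlinarith
  have hy3 : y ^ 3 ≤ y := by nlinarith
  have hp0 : 0 ≤ p := by rw [hp]; nlinarith [pow_nonneg h0 3]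
  have hp1 : p ≤ 1 := by rw [hp]; nlinarith
  have hpp : p ^ 2 ≤ 1 := by nlinarith
  have hle : x ^ 2 ≤ 2 * y := by rw [hx2]; nlinarith
  have hx1 : |x| ≤ 1 := by
    rw [← sq_le_one_iff_abs_le_one]; linarith
  have hcos := aux_cos x hx1
  have hexp := aux_exp y h0 (by linarith)
  have hpoly := aux_poly y (x ^ 2) hx2
  have hx5 : (x ^ 2) ^ 5 ≤ 32 * y ^ 5 := by
    calc (x ^ 2) ^ 5 ≤ (2 * y) ^ 5 := by gcongr
      _ = 32 * y ^ 5 := by ring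
  have hy5 : 0 ≤ y ^ 5 := by positivity
  rw [Real.norm_eq_abs] at hQ
  have hb : |y ^ 5 * auxQ y| ≤ M * y ^ 5 := by
    rw [abs_mul, abs_of_nonneg hy5, mul_comm]
    gcongr
  rw [← hpoly] at hb
  clear hpoly hM hQ hx1 harg r3 r5 r7
  rw [abs_le] at hb hcos hexp ⊢
  constructor <;> linarith [hb.1, hb.2, hcos.1, hcos.2, hexp.1, hexp.2]
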